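/- Let W be the augmented mixing matrix of RelaySum. Then the algebraic multiplicity of the eigenvalue 1 of W (its multiplicity as a root of the characteristic polynomial of W) is 1. -/

import Mathlib

noncomputable section
open MeasureTheory Matrix

/-- The augmented RelaySum mixing matrix `W`. Index `(τ, i)` plays the role of `nτ+i`. -/
def relayW (n τm : ℕ) (τ : Fin n → Fin n → Fin (τm + 1)) :
    Matrix (Fin (τm + 1) × Fin n) (Fin (τm + 1) × Fin n) ℝ := fun p q =>
  if p.1 = 0 ∧ q.1 = τ p.2 q.2 then (n : ℝ)⁻¹
  else if p.2 = q.2 ∧ (p.1 : ℕ) = (q.1 : ℕ) + 1 then 1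
  else 0

lemma relayW_mulVec_zero (n τm : ℕ) (τ : Fin n → Fin n → Fin (τm + 1))
    (v : Fin (τm + 1) × Fin n → ℝ) (i : Fin n) :
    (relayW n τm τ *ᵥ v) (0, i) = (n : ℝ)⁻¹ * ∑ j, v (τ i j, j) := by
  simp only [Matrix.mulVec, dotProduct, relayW, Fintype.sum_prod_type]
  rw [Finset.sum_comm, Finset.mul_sum]
  refine Finset.sum_congr rfl fun j _ => ?_
  rw [Finset.sum_eq_single (τ i j)]
  · simp
  · intro b _ hb
    simp [hb]
  · simp

lemma relayW_mulVec_succ (n τm : ℕ) (τ : Fin n → Fin n → Fin (τm + 1))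
    (v : Fin (τm + 1) × Fin n → ℝ) (t : Fin τm) (i : Fin n) :
    (relayW n τm τ *ᵥ v) (t.succ, i) = v (t.castSucc, i) := by
  simp only [Matrix.mulVec, dotProduct, relayW]
  rw [Finset.sum_eq_single (t.castSucc, i)]
  · simp [Fin.succ_ne_zero]
  · rintro ⟨a, b⟩ _ hb
    have : ¬ (i = b ∧ (t.succ : ℕ) = (a : ℕ) + 1) := by
      rintro ⟨rfl, h⟩
      apply hb
      ext
      · simp at h ⊢; omega
      · rfl
    simp only [Fin.succ_ne_zero, false_and, if_false, this, zero_mul]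
  · simp

lemma relayW_key (n τm : ℕ) (hn : 1 ≤ n) (τ : Fin n → Fin n → Fin (τm + 1))
    (v : Fin (τm + 1) × Fin n → ℝ) (c : ℝ)
    (h : ∀ p, (relayW n τm τ *ᵥ v) p - v p = c) : ∃ d : ℝ, v = fun _ => d := by
  have hn' : (n : ℝ) ≠ 0 := by positivity
  have h1 : ∀ (t : Fin (τm + 1)) (i : Fin n), v (t, i) = v (0, i) - c * (t : ℕ) := by
    intro t i
    induction t using Fin.induction with
    | zero => simp
    | succ t ih =>
      have := h (t.succ, i)
      rw [relayW_mulVec_succ] at this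
      simp only [Fin.val_castSucc, Fin.val_succ] at ih ⊢
      push_cast
      linarith
  have h2 : ∀ i, ∑ j, v (0, j) - c * ∑ j, ((τ i j : ℕ) : ℝ) - n * v (0, i) = n * c := by
    intro i
    have := h (0, i)
    rw [relayW_mulVec_zero] at this
    simp_rw [h1 (τ i _) _] at this
    rw [Finset.sum_sub_distrib, ← Finset.mul_sum] at this
    have h3 := congrArg (fun x => (n : ℝ) * x) this
    simp only [mul_sub, mul_inv_cancel_left₀ hn'] at h3
    linarith
  have hc : c = 0 := by
    have h3 := Finset.sum_congr (rfl : (Finset.univ : Finset (Fin n)) = Finset.univ)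
      fun i _ => h2 i
    simp only [Finset.sum_sub_distrib, ← Finset.mul_sum, Finset.sum_const, Finset.card_univ,
      Fintype.card_fin, nsmul_eq_mul] at h3
    have h4 : c * ((n : ℝ) * n + ∑ i, ∑ j, ((τ i j : ℕ) : ℝ)) = 0 := by linarith
    have h5 : (0 : ℝ) < (n : ℝ) * n + ∑ i, ∑ j, ((τ i j : ℕ) : ℝ) := by positivity
    exact (mul_eq_zero.mp h4).resolve_right h5.ne'
  subst hc
  refine ⟨(n : ℝ)⁻¹ * ∑ j, v (0, j), ?_⟩
  ext ⟨t, i⟩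
  have := h2 i
  rw [h1]
  field_simp
  linarith

lemma relayW_gen (n τm : ℕ) (hn : 1 ≤ n) (τ : Fin n → Fin n → Fin (τm + 1)) (k : ℕ) :
    ∀ v : Fin (τm + 1) × Fin n → ℝ,
    ((Matrix.toLin' (relayW n τm τ) - (1 : ℝ) • 1) ^ k) v = 0 → ∃ d : ℝ, v = fun _ => d := by
  induction k with
  | zero => intro v hv; exact ⟨0, funext fun p => by simpa using congrFun hv p⟩
  | succ k ih =>
    intro v hv
    rw [pow_succ, Module.End.mul_apply] at hv
    obtain ⟨c, hc⟩ := ih _ hv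
    refine relayW_key n τm hn τ v c fun p => ?_
    simpa using congrFun hc p

/-- the algebraic multiplicity of the eigenvalue `1` of `W`, i.e. its multiplicity
as a root of the characteristic polynomial of `W`, is one. -/
theorem relayW_algebraic_multiplicity_one
    (n τm : ℕ) (hn : 1 ≤ n)
    (τ : Fin n → Fin n → Fin (τm + 1))
    (hτdiag : ∀ i, τ i i = 0) (hτsymm : ∀ i j, τ i j = τ j i) :
    Polynomial.rootMultiplicity (1 : ℝ) (Matrix.charpoly (relayW n τm τ)) = 1 := by
  rw [← Matrix.charpoly_toLin', ← LinearMap.finrank_maxGenEigenspace_eq]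
  rw [finrank_eq_one_iff']
  have hn' : (n : ℝ) ≠ 0 := by positivity
  have hmem : (fun _ => (1 : ℝ)) ∈
      Module.End.maxGenEigenspace (Matrix.toLin' (relayW n τm τ)) 1 := by
    rw [Module.End.mem_maxGenEigenspace]
    refine ⟨1, ?_⟩
    ext ⟨t, i⟩
    rw [pow_one]
    simp only [one_smul, LinearMap.sub_apply, Matrix.toLin'_apply, Module.End.one_apply,
      Pi.sub_apply, Pi.zero_apply]
    induction t using Fin.cases with
    | zero => rw [relayW_mulVec_zero]; simp [hn']
    | succ t => rw [relayW_mulVec_succ]; simp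
  refine ⟨⟨_, hmem⟩, ?_, ?_⟩
  · intro h0
    have := congrFun (congrArg Subtype.val h0) (0, ⟨0, hn⟩)
    simp at this
  · rintro ⟨w, hw⟩
    rw [Module.End.mem_maxGenEigenspace] at hw
    obtain ⟨k, hk⟩ := hw
    obtain ⟨d, rfl⟩ := relayW_gen n τm hn τ k w hk
    refine ⟨d, ?_⟩
    ext p
    simp
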